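/- The real Gamma function satisfies Γ(11/60) = (√π · √φ · √(√15 − ψ) · √(√10 − √φ) / (2^(5/4) · √3 · 5^(17/24))) · Γ(1/3)⁻¹ · Γ(1/60), where φ = 5 + √5 and ψ = √(5 + 2√5). -/

import Mathlib

open Real

/-!
The duplication, triplication, quintuplication and reflection formulas relate the values of `Γ` at
multiples of `1 / 60`. Writing `∼` for equality up to powers of `π`, `2`, `3`, `5` and sines, they
give

* `Γ(1/60) Γ(21/60) Γ(22/60) ∼ Γ(11/60) Γ(3/60)`,
* `Γ(1/60) ∼ Γ(20/60)² Γ(22/60) Γ(29/60)`,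
* `Γ(9/60) Γ(29/60) ∼ Γ(27/60) Γ(11/60)`,
* `Γ(3/60) Γ(27/60) ∼ Γ(21/60) Γ(9/60)`,

and in the product of the four everything cancels except `Γ(1/60)² ∼ Γ(11/60)² Γ(20/60)²`. The
nested radicals of the statement are the square root of the trigonometric factor left over, which
lies in the field generated by `√2`, `√3`, `√5` and `sin (π / 5)`.

The multiplication formula itself comes from the Bohr-Mollerup theorem, its constant from
reflection and `∏ 2 sin (k π / n) = n`.
-/

open Finset

theorem convexOn_finset_sum {𝕜 E β ι : Type*} [Semiring 𝕜] [PartialOrder 𝕜] [AddCommMonoid E]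
    [AddCommMonoid β] [PartialOrder β] [IsOrderedAddMonoid β] [SMul 𝕜 E] [Module 𝕜 β]
    {s : Set E} (hs : Convex 𝕜 s) (t : Finset ι) {f : ι → E → β}
    (hf : ∀ i ∈ t, ConvexOn 𝕜 s (f i)) : ConvexOn 𝕜 s (∑ i ∈ t, f i) :=
  sum_induction f (ConvexOn 𝕜 s) (fun _ _ => ConvexOn.add) (convexOn_const 0 hs) hf

theorem prod_two_mul_sin_pi_div (n : ℕ) :
    ∏ k ∈ range n, 2 * sin (π * ((k + 1) / (n + 1))) = n + 1 := by
  have hζ := Complex.isPrimitiveRoot_exp (n + 1) n.succ_ne_zero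
  have norm_one_sub : ∀ k ∈ range n,
      ‖1 - Complex.exp (2 * π * Complex.I / (n + 1 : ℕ)) ^ (k + 1)‖
        = 2 * sin (π * ((k + 1) / (n + 1))) := by
    intro k hk
    have hle : ((k : ℝ) + 1) / (n + 1) ≤ 1 := by
      rw [div_le_one (by positivity)]
      exact_mod_cast Nat.succ_le_succ (mem_range.mp hk).le
    have hsin : 0 ≤ sin (π * ((k + 1) / (n + 1))) :=
      sin_nonneg_of_nonneg_of_le_pi (by positivity) (mul_le_of_le_one_right pi_pos.le hle)
    have hexp : Complex.exp (2 * π * Complex.I / (n + 1 : ℕ)) ^ (k + 1)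
        = Complex.exp (Complex.I * (2 * (π * ((k + 1) / (n + 1))) : ℝ)) := by
      rw [← Complex.exp_nat_mul]
      congr 1
      push_cast
      ring
    rw [hexp, norm_sub_rev, Complex.norm_exp_I_mul_ofReal_sub_one,
      mul_div_cancel_left₀ _ two_ne_zero, Real.norm_of_nonneg (by positivity)]
  rw [← prod_congr rfl norm_one_sub, ← norm_prod, hζ.prod_one_sub_pow_eq_order]
  norm_cast

/-- The left-hand side of Gauss's multiplication formula, with its argument rescaled so that it
satisfies the functional equation of `Gamma` up to a factor `n`. -/
noncomputable def gaussGammaProd (n : ℕ) (x : ℝ) : ℝ :=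
  ∏ k ∈ range n, Gamma ((x + k) / n)

section gaussGammaProd

variable {n : ℕ} {x : ℝ}

theorem Gamma_add_div_pos {k : ℕ} (hk : k ∈ range n) (hx : 0 < x) : 0 < Gamma ((x + k) / n) := by
  have hn : n ≠ 0 := Nat.ne_zero_of_lt (mem_range.mp hk)
  positivity

theorem gaussGammaProd_pos (n : ℕ) (hx : 0 < x) : 0 < gaussGammaProd n x :=
  prod_pos fun _ hk => Gamma_add_div_pos hk hx

theorem gaussGammaProd_add_one (hn : n ≠ 0) (hx : 0 < x) :
    gaussGammaProd n (x + 1) = x / n * gaussGammaProd n x := by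
  have hΓ : Gamma (x / n) ≠ 0 := by positivity
  have top : Gamma ((x + n) / n) = x / n * Gamma (x / n) := by
    rw [add_div, div_self (by positivity), Gamma_add_one (by positivity)]
  have telescope := (prod_range_succ' (fun k : ℕ => Gamma ((x + k) / n)) n).symm.trans
    (prod_range_succ (fun k : ℕ => Gamma ((x + k) / n)) n)
  simp only [Nat.cast_add, Nat.cast_one, Nat.cast_zero, add_zero, top] at telescope
  simp only [gaussGammaProd, add_right_comm x 1, add_assoc x]
  refine mul_right_cancel₀ hΓ (telescope.trans ?_)
  ring

theorem log_gaussGammaProd (n : ℕ) (hx : 0 < x) :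
    log (gaussGammaProd n x) = ∑ k ∈ range n, log (Gamma ((x + k) / n)) :=
  log_prod fun _ hk => (Gamma_add_div_pos hk hx).ne'

theorem convexOn_log_gaussGammaProd (n : ℕ) :
    ConvexOn ℝ (Set.Ioi 0) (fun x => log (gaussGammaProd n x)) := by
  have convex_term : ∀ k ∈ range n,
      ConvexOn ℝ (Set.Ioi 0) (fun x : ℝ => log (Gamma ((x + k) / n))) := by
    intro k hk
    have hn : n ≠ 0 := Nat.ne_zero_of_lt (mem_range.mp hk)
    let g : ℝ →ᵃ[ℝ] ℝ := AffineMap.lineMap (k / n : ℝ) ((k + 1) / n)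
    have hg : ∀ x, g x = (x + k) / n := fun x => by
      rw [AffineMap.lineMap_apply_ring']
      ring
    refine ((convexOn_log_Gamma.comp_affineMap g).subset ?_ (convex_Ioi 0)).congr ?_
    · intro x (hx : 0 < x)
      rw [Set.mem_preimage, hg]
      exact Set.mem_Ioi.mpr (by positivity)
    · intro x _
      simp only [Function.comp_apply, hg]
  refine (convexOn_finset_sum (convex_Ioi 0) (range n) convex_term).congr fun x hx => ?_
  rw [Finset.sum_apply, log_gaussGammaProd n hx]

theorem prod_Gamma_div_sq (m : ℕ) :
    (∏ k ∈ range m, Gamma (((k : ℝ) + 1) / (m + 1))) ^ 2 = (2 * π) ^ m / (m + 1) := by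
  have reflected : ∏ k ∈ range m, Gamma (((k : ℝ) + 1) / (m + 1))
      = ∏ k ∈ range m, Gamma (1 - (k + 1) / (m + 1)) := by
    rw [← prod_range_reflect]
    refine prod_congr rfl fun k hk => congrArg Gamma ?_
    rw [Nat.sub_sub, Nat.cast_sub (by have := mem_range.mp hk; omega)]
    field_simp
    push_cast
    ring
  calc (∏ k ∈ range m, Gamma (((k : ℝ) + 1) / (m + 1))) ^ 2
      = ∏ k ∈ range m, Gamma ((k + 1) / (m + 1)) * Gamma (1 - (k + 1) / (m + 1)) := by
        rw [prod_mul_distrib, ← reflected, sq]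
    _ = ∏ k ∈ range m, 2 * π / (2 * sin (π * ((k + 1) / (m + 1)))) :=
        prod_congr rfl fun k _ => by
          rw [Gamma_mul_Gamma_one_sub, mul_div_mul_left _ _ two_ne_zero]
    _ = (2 * π) ^ m / (m + 1) := by
        rw [prod_div_distrib, prod_const, card_range, prod_two_mul_sin_pi_div]

theorem gaussGammaProd_one (hn : n ≠ 0) :
    gaussGammaProd n 1 = (2 * π) ^ (((n : ℝ) - 1) / 2) * (n : ℝ) ^ (-(1 / 2) : ℝ) := by
  obtain ⟨m, rfl⟩ := Nat.exists_eq_succ_of_ne_zero hn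
  have drop_last : gaussGammaProd (m + 1) 1 = ∏ k ∈ range m, Gamma ((k + 1) / (m + 1)) := by
    have last : Gamma ((1 + m) / ((m + 1 : ℕ) : ℝ)) = 1 := by
      rw [add_comm, Nat.cast_succ, div_self (by positivity), Gamma_one]
    rw [gaussGammaProd, prod_range_succ, last, mul_one]
    exact prod_congr rfl fun k _ => by rw [add_comm, Nat.cast_succ]
  rw [← pow_left_inj₀ (gaussGammaProd_pos _ one_pos).le (by positivity) two_ne_zero,
    drop_last, prod_Gamma_div_sq, mul_pow (_ ^ (_ : ℝ)), ← rpow_mul_natCast (by positivity),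
    ← rpow_mul_natCast (by positivity), Nat.cast_ofNat, neg_mul, div_mul_cancel₀ _ two_ne_zero,
    div_mul_cancel₀ _ two_ne_zero, Nat.cast_succ, add_sub_cancel_right, rpow_natCast, rpow_neg_one,
    div_eq_mul_inv]

theorem gaussGammaProd_eq_mul_Gamma (hn : n ≠ 0) (hx : 0 < x) :
    gaussGammaProd n x = gaussGammaProd n 1 * (n : ℝ) ^ (1 - x) * Gamma x := by
  have hn' : (0 : ℝ) < n := by positivity
  have hone := gaussGammaProd_pos n one_pos
  have hΓ : (n : ℝ) ^ (x - 1) / gaussGammaProd n 1 * gaussGammaProd n x = Gamma x := by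
    refine eq_Gamma_of_log_convex
      (f := fun y => (n : ℝ) ^ (y - 1) / gaussGammaProd n 1 * gaussGammaProd n y) ?_ ?_ ?_ ?_ hx
    · have hlog : 0 ≤ log n := log_natCast_nonneg n
      refine ((((convexOn_id (convex_Ioi (0 : ℝ))).add_const (-1)).smul hlog).add_const
        (-log (gaussGammaProd n 1)) |>.add (convexOn_log_gaussGammaProd n)).congr fun y hy => ?_
      have hy' := gaussGammaProd_pos n hy
      simp only [Function.comp_apply, Pi.add_apply, id, smul_eq_mul]
      rw [log_mul (by positivity) hy'.ne', log_div (by positivity) hone.ne', log_rpow hn']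
      ring
    · intro y hy
      rw [gaussGammaProd_add_one hn hy, add_sub_right_comm, rpow_add_one hn'.ne']
      field_simp
    · intro y hy
      have := gaussGammaProd_pos n hy
      positivity
    · rw [sub_self, rpow_zero, one_div_mul_cancel hone.ne']
  rw [← hΓ, ← neg_sub, rpow_neg hn'.le]
  field_simp

theorem prod_Gamma_add_div (hn : n ≠ 0) (hx : 0 < x) :
    ∏ k ∈ range n, Gamma (x + k / n)
      = (2 * π) ^ (((n : ℝ) - 1) / 2) * (n : ℝ) ^ (1 / 2 - n * x) * Gamma (n * x) := by
  have hn' : (n : ℝ) ≠ 0 := by positivity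
  calc ∏ k ∈ range n, Gamma (x + k / n) = gaussGammaProd n (n * x) :=
        prod_congr rfl fun k _ => by rw [add_div, mul_div_cancel_left₀ _ hn']
    _ = (2 * π) ^ (((n : ℝ) - 1) / 2) * ((n : ℝ) ^ (-(1 / 2) : ℝ) * (n : ℝ) ^ (1 - n * x))
          * Gamma (n * x) := by
        rw [gaussGammaProd_eq_mul_Gamma hn (by positivity), gaussGammaProd_one hn]
        ring
    _ = _ := by
        rw [← rpow_add (by positivity)]
        ring_nf

end gaussGammaProd

theorem Gamma_triplication {x : ℝ} (hx : 0 < x) :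
    Gamma x * Gamma (x + 1 / 3) * Gamma (x + 2 / 3)
      = 2 * π * 3 ^ (1 / 2 - 3 * x) * Gamma (3 * x) := by
  have h := prod_Gamma_add_div three_ne_zero hx
  norm_num [prod_range_succ] at h
  norm_num [h]

/-- Triplication at `x` and duplication at `x + 1 / 6` share the value `Gamma (x + 2 / 3)`. -/
theorem Gamma_mul_Gamma_add_third_mul_Gamma_two_mul_add_third {x : ℝ} (hx : 0 < x) :
    Gamma x * Gamma (x + 1 / 3) * Gamma (2 * x + 1 / 3)
      = √π * 2 ^ (1 / 3 + 2 * x) * 3 ^ (1 / 2 - 3 * x) * (Gamma (x + 1 / 6) * Gamma (3 * x)) := by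
  have triplication := Gamma_triplication hx
  have duplication := Gamma_mul_Gamma_add_half (x + 1 / 6)
  rw [show x + 1 / 6 + 1 / 2 = x + 2 / 3 by ring, show 2 * (x + 1 / 6) = 2 * x + 1 / 3 by ring,
    show 1 - (2 * x + 1 / 3) = 2 / 3 - 2 * x by ring] at duplication
  have two_rpow : (2 : ℝ) ^ (1 / 3 + 2 * x) * 2 ^ (2 / 3 - 2 * x) = 2 := by
    rw [← rpow_add two_pos, show 1 / 3 + 2 * x + (2 / 3 - 2 * x) = 1 by ring, rpow_one]
  have hcancel : Gamma (x + 2 / 3) * (2 ^ (2 / 3 - 2 * x) * √π) ≠ 0 := by positivity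
  refine mul_right_cancel₀ hcancel ?_
  calc Gamma x * Gamma (x + 1 / 3) * Gamma (2 * x + 1 / 3)
        * (Gamma (x + 2 / 3) * (2 ^ (2 / 3 - 2 * x) * √π))
      = (Gamma x * Gamma (x + 1 / 3) * Gamma (x + 2 / 3))
          * (Gamma (2 * x + 1 / 3) * 2 ^ (2 / 3 - 2 * x) * √π) := by ring
    _ = √π ^ 2 * (2 ^ (1 / 3 + 2 * x) * 2 ^ (2 / 3 - 2 * x)) * 3 ^ (1 / 2 - 3 * x) * Gamma (3 * x)
          * (Gamma (x + 1 / 6) * Gamma (x + 2 / 3)) := by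
        rw [triplication, ← duplication, two_rpow, sq_sqrt pi_pos.le]
        ring
    _ = _ := by ring

/-- Triplication, with reflection applied to `Gamma (x + 2 / 3)`. -/
theorem Gamma_mul_Gamma_add_third {x : ℝ} (hx : 0 < x)
    (hsin : sin (π * (1 / 3 - x)) ≠ 0) :
    Gamma x * Gamma (x + 1 / 3)
      = 2 * 3 ^ (1 / 2 - 3 * x) * sin (π * (1 / 3 - x)) * (Gamma (3 * x) * Gamma (1 / 3 - x)) := by
  have triplication := Gamma_triplication hx
  have reflection := Gamma_mul_Gamma_one_sub (1 / 3 - x)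
  rw [show 1 - (1 / 3 - x) = x + 2 / 3 by ring, eq_div_iff hsin] at reflection
  have hΓ : 0 < Gamma (x + 2 / 3) := by positivity
  refine mul_right_cancel₀ hΓ.ne' ?_
  linear_combination triplication - 2 * 3 ^ (1 / 2 - 3 * x) * Gamma (3 * x) * reflection

/-- Duplication, with reflection applied to `Gamma (x + 1 / 2)`. -/
theorem sqrt_pi_mul_Gamma_eq {x : ℝ} (hx : cos (π * x) ≠ 0) :
    √π * Gamma x = 2 ^ (1 - 2 * x) * cos (π * x) * (Gamma (1 / 2 - x) * Gamma (2 * x)) := by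
  have duplication := Gamma_mul_Gamma_add_half x
  have reflection := Gamma_mul_Gamma_one_sub (1 / 2 - x)
  rw [show 1 - (1 / 2 - x) = x + 1 / 2 by ring, show π * (1 / 2 - x) = π / 2 - π * x by ring,
    sin_pi_div_two_sub, eq_div_iff hx] at reflection
  have hΓ : Gamma (x + 1 / 2) ≠ 0 := by
    intro h
    rw [h, mul_zero, zero_mul] at reflection
    exact pi_ne_zero reflection.symm
  refine mul_right_cancel₀ hΓ ?_
  linear_combination √π * duplication
    + 2 ^ (1 - 2 * x) * Gamma (2 * x) * (sq_sqrt pi_pos.le - reflection)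

theorem pi_mul_Gamma_eq {x : ℝ} (hx : cos (π * x) ≠ 0) (hx' : cos (π * (2 * x)) ≠ 0) :
    π * Gamma x = 2 ^ (2 - 6 * x) * cos (π * x) * cos (π * (2 * x))
      * (Gamma (1 / 2 - x) * Gamma (1 / 2 - 2 * x) * Gamma (4 * x)) := by
  have two_rpow : (2 : ℝ) ^ (2 - 6 * x) = 2 ^ (1 - 2 * x) * 2 ^ (1 - 2 * (2 * x)) := by
    rw [← rpow_add two_pos]
    ring_nf
  have at_two_mul := sqrt_pi_mul_Gamma_eq hx'
  rw [show 2 * (2 * x) = 4 * x by ring] at at_two_mul two_rpow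
  linear_combination √π * sqrt_pi_mul_Gamma_eq hx - Gamma x * sq_sqrt pi_pos.le
    + 2 ^ (1 - 2 * x) * cos (π * x) * Gamma (1 / 2 - x) * at_two_mul
    - cos (π * x) * cos (π * (2 * x))
      * (Gamma (1 / 2 - x) * Gamma (1 / 2 - 2 * x) * Gamma (4 * x)) * two_rpow

theorem Gamma_quintuplication {x : ℝ} (hx : 0 < x) :
    Gamma x * Gamma (x + 1 / 5) * Gamma (x + 2 / 5) * Gamma (x + 3 / 5) * Gamma (x + 4 / 5)
      = (2 * π) ^ 2 * 5 ^ (1 / 2 - 5 * x) * Gamma (5 * x) := by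
  have h := prod_Gamma_add_div (n := 5) (by norm_num) hx
  norm_num [prod_range_succ] at h
  norm_num [h]

theorem sin_mul_sin_pi_div_three_sub_mul_sin_pi_div_three_add (t : ℝ) :
    sin t * sin (π / 3 - t) * sin (π / 3 + t) = sin (3 * t) / 4 := by
  have hsqrt : √3 ^ 2 = 3 := sq_sqrt (by norm_num)
  rw [sin_three_mul, sin_sub, sin_add, sin_pi_div_three, cos_pi_div_three]
  linear_combination sin t * cos t ^ 2 / 4 * hsqrt + 3 / 4 * sin t * sin_sq_add_cos_sq t

theorem sin_pi_div_five_sq : sin (π / 5) ^ 2 = (5 - √5) / 8 := by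
  have hsqrt : √5 ^ 2 = 5 := sq_sqrt (by norm_num)
  rw [sin_sq, cos_pi_div_five]
  linear_combination -hsqrt / 16

theorem sin_pi_div_five_pos : 0 < sin (π / 5) :=
  sin_pos_of_pos_of_lt_pi (by positivity) (div_lt_self pi_pos (by norm_num))

theorem sqrt_five_add_sqrt_five : √(5 + √5) = √2 * (1 + √5) * sin (π / 5) := by
  have hsqrt : √5 ^ 2 = 5 := sq_sqrt (by norm_num)
  have := sin_pi_div_five_pos
  rw [sqrt_eq_iff_eq_sq (by positivity) (by positivity), mul_pow, mul_pow, sin_pi_div_five_sq,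
    sq_sqrt zero_le_two]
  linear_combination (√5 - 3) / 4 * hsqrt

theorem sqrt_five_add_two_mul_sqrt_five : √(5 + 2 * √5) = (3 + √5) * sin (π / 5) := by
  have hsqrt : √5 ^ 2 = 5 := sq_sqrt (by norm_num)
  have := sin_pi_div_five_pos
  rw [sqrt_eq_iff_eq_sq (by positivity) (by positivity), mul_pow, sin_pi_div_five_sq]
  linear_combination (√5 + 1) / 8 * hsqrt

theorem sqrt_fifteen_sub_mul_cos_two_pi_div_fifteen :
    (√15 - √(5 + 2 * √5)) * cos (2 * π / 15) = (√5 - 1) * sin (π / 5) := by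
  have sqrt_three_sq : √3 ^ 2 = 3 := sq_sqrt (by norm_num)
  have sqrt_five_sq : √5 ^ 2 = 5 := sq_sqrt (by norm_num)
  have sqrt_fifteen : √15 = √3 * √5 := by
    rw [← sqrt_mul (by norm_num)]
    norm_num
  rw [show 2 * π / 15 = π / 3 - π / 5 by ring, cos_sub, cos_pi_div_three, sin_pi_div_three,
    cos_pi_div_five, sqrt_fifteen, sqrt_five_add_two_mul_sqrt_five]
  linear_combination √5 / 2 * sin (π / 5) * sqrt_three_sq
    - √3 / 2 * (3 + √5) * sin_pi_div_five_sq + (3 * √3 / 16 - sin (π / 5) / 8) * sqrt_five_sq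

theorem cos_pi_div_ten_eq_two_mul_sin_mul_cos : cos (π / 10) = 2 * sin (π / 5) * cos (π / 5) := by
  rw [← sin_two_mul, ← cos_pi_div_two_sub]
  ring_nf

theorem sqrt_ten_sub_mul_cos_add_cos :
    (√10 - √(5 + √5)) * (cos (π / 10) + cos (π / 5))
      = √2 * (√5 - 1) * sin (π / 5) * cos (π / 5) := by
  have sqrt_five_sq : √5 ^ 2 = 5 := sq_sqrt (by norm_num)
  have sqrt_ten : √10 = √2 * √5 := by
    rw [← sqrt_mul (by norm_num)]
    norm_num
  rw [sqrt_ten, sqrt_five_add_sqrt_five, cos_pi_div_ten_eq_two_mul_sin_mul_cos]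
  linear_combination √2 * cos (π / 5) * (sqrt_five_sq / 4 - 2 * (1 + √5) * sin_pi_div_five_sq)

theorem radicals_mul_cosines :
    (5 + √5) * (√15 - √(5 + 2 * √5)) * (√10 - √(5 + √5))
      * (cos (π / 5) * cos (2 * π / 15) * (cos (π / 10) + cos (π / 5))) = 5 / 2 * √2 := by
  have sqrt_five_sq : √5 ^ 2 = 5 := sq_sqrt (by norm_num)
  have conjugate : (√5 - 1) * cos (π / 5) = 1 := by
    rw [cos_pi_div_five]
    linear_combination sqrt_five_sq / 4
  calc (5 + √5) * (√15 - √(5 + 2 * √5)) * (√10 - √(5 + √5))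
        * (cos (π / 5) * cos (2 * π / 15) * (cos (π / 10) + cos (π / 5)))
      = (5 + √5) * cos (π / 5) * ((√15 - √(5 + 2 * √5)) * cos (2 * π / 15))
          * ((√10 - √(5 + √5)) * (cos (π / 10) + cos (π / 5))) := by ring
    _ = √2 * (5 + √5) * ((√5 - 1) * cos (π / 5)) ^ 2 * sin (π / 5) ^ 2 := by
        rw [sqrt_fifteen_sub_mul_cos_two_pi_div_fifteen, sqrt_ten_sub_mul_cos_add_cos]
        ring
    _ = √2 * (25 - √5 ^ 2) / 8 := by
        rw [conjugate, sin_pi_div_five_sq]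
        ring
    _ = 5 / 2 * √2 := by
        rw [sqrt_five_sq]
        ring

theorem cos_pi_div_thirty_mul_sin : cos (π / 30) * sin (2 * π / 15) = cos (π / 5) / 2 := by
  have triple := sin_mul_sin_pi_div_three_sub_mul_sin_pi_div_three_add (2 * π / 15)
  rw [show π / 3 - 2 * π / 15 = π / 5 by ring, show π / 3 + 2 * π / 15 = π / 2 - π / 30 by ring,
    show 3 * (2 * π / 15) = 2 * (π / 5) by ring, sin_pi_div_two_sub, sin_two_mul] at triple
  refine mul_left_cancel₀ sin_pi_div_five_pos.ne' ?_
  linear_combination triple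

theorem cos_pi_div_sixty_mul_sin_mul_sin_mul_sin :
    cos (π / 60) * sin (11 * π / 60) * sin (7 * π / 20) * sin (3 * π / 20)
      = (cos (π / 10) + cos (π / 5)) / 8 := by
  have triple := sin_mul_sin_pi_div_three_sub_mul_sin_pi_div_three_add (3 * π / 20)
  rw [show π / 3 - 3 * π / 20 = 11 * π / 60 by ring,
    show π / 3 + 3 * π / 20 = π / 2 - π / 60 by ring, sin_pi_div_two_sub] at triple
  have sum := two_mul_sin_mul_sin (3 * (3 * π / 20)) (7 * π / 20)
  rw [show 3 * (3 * π / 20) - 7 * π / 20 = π / 10 by ring,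
    show 3 * (3 * π / 20) + 7 * π / 20 = π - π / 5 by ring, cos_pi_sub] at sum
  linear_combination sin (7 * π / 20) * triple + sum / 8

theorem sqrt_pi_mul_Gamma_one_fifteenth_mul_Gamma_seven_fifteenths :
    √π * (Gamma (1 / 15) * Gamma (7 / 15))
      = 2 ^ (26 / 15 : ℝ) * √3 * 5 ^ (1 / 6 : ℝ) * (cos (2 * π / 15) * sin (2 * π / 15))
        * (Gamma (1 / 3) ^ 2 * Gamma (11 / 30)) := by
  have angle : π * (2 / 15) = 2 * π / 15 := by ring
  have cos_pos : 0 < cos (2 * π / 15) :=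
    cos_pos_of_mem_Ioo ⟨by linarith [pi_pos], by linarith [pi_pos]⟩
  have sin_pos : 0 < sin (2 * π / 15) :=
    sin_pos_of_pos_of_lt_pi (by positivity) (by linarith [pi_pos])
  have quintuplication := Gamma_quintuplication (x := 1 / 15) (by norm_num)
  have duplication := sqrt_pi_mul_Gamma_eq (x := 2 / 15) (by rw [angle]; exact cos_pos.ne')
  have reflection := Gamma_mul_Gamma_one_sub (2 / 15)
  have reflection_third := Gamma_mul_Gamma_one_sub (1 / 3)
  rw [angle] at duplication reflection
  rw [eq_div_iff sin_pos.ne'] at reflection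
  rw [mul_one_div, sin_pi_div_three, eq_div_iff (by positivity)] at reflection_third
  norm_num at quintuplication duplication reflection reflection_third
  have two_rpow : (2 : ℝ) ^ (26 / 15 : ℝ) = 2 * 2 ^ (11 / 15 : ℝ) := by
    rw [← rpow_one_add' zero_le_two (by norm_num)]
    norm_num
  have hcancel : π * (π * Gamma (4 / 15)) ≠ 0 := by positivity
  refine mul_right_cancel₀ hcancel ?_
  calc √π * (Gamma (1 / 15) * Gamma (7 / 15)) * (π * (π * Gamma (4 / 15)))
      = (Gamma (1 / 15) * Gamma (4 / 15) * Gamma (7 / 15) * Gamma (2 / 3) * Gamma (13 / 15))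
          * (√π * Gamma (2 / 15)) * Gamma (1 / 3) * (√3 / 2 * sin (2 * π / 15)) := by
        linear_combination -√π * Gamma (1 / 15) * Gamma (7 / 15) * Gamma (4 / 15)
          * (π * reflection + Gamma (2 / 15) * Gamma (13 / 15) * sin (2 * π / 15)
            * reflection_third)
    _ = _ := by
        rw [quintuplication, duplication, two_rpow]
        ring

theorem Gamma_one_twentieth_mul_Gamma_nine_twentieths :
    Gamma (1 / 20) * Gamma (9 / 20)
      = 4 * 5 ^ (1 / 4 : ℝ) * (sin (7 * π / 20) * sin (3 * π / 20))
        * (Gamma (7 / 20) * Gamma (3 / 20)) := by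
  have sin_seven_pos : 0 < sin (7 * π / 20) :=
    sin_pos_of_pos_of_lt_pi (by positivity) (by linarith [pi_pos])
  have sin_three_pos : 0 < sin (3 * π / 20) :=
    sin_pos_of_pos_of_lt_pi (by positivity) (by linarith [pi_pos])
  have quintuplication := Gamma_quintuplication (x := 1 / 20) (by norm_num)
  have reflection_seven := Gamma_mul_Gamma_one_sub (7 / 20)
  have reflection_three := Gamma_mul_Gamma_one_sub (3 / 20)
  rw [show π * (7 / 20) = 7 * π / 20 by ring, eq_div_iff sin_seven_pos.ne'] at reflection_seven
  rw [show π * (3 / 20) = 3 * π / 20 by ring, eq_div_iff sin_three_pos.ne'] at reflection_three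
  norm_num at quintuplication reflection_seven reflection_three
  have quotient : Gamma (1 / 20) * Gamma (9 / 20) * Gamma (13 / 20) * Gamma (17 / 20)
      = (2 * π) ^ 2 * 5 ^ (1 / 4 : ℝ) :=
    mul_right_cancel₀ (b := Gamma (1 / 4)) (by positivity) (by linear_combination quintuplication)
  refine mul_right_cancel₀ (b := Gamma (13 / 20) * Gamma (17 / 20)) (by positivity) ?_
  calc Gamma (1 / 20) * Gamma (9 / 20) * (Gamma (13 / 20) * Gamma (17 / 20))
      = 4 * 5 ^ (1 / 4 : ℝ) * (Gamma (7 / 20) * Gamma (13 / 20) * sin (7 * π / 20))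
          * (Gamma (3 / 20) * Gamma (17 / 20) * sin (3 * π / 20)) := by
        rw [reflection_seven, reflection_three]
        linear_combination quotient
    _ = _ := by ring

theorem pi_mul_sqrt_pi_mul_Gamma_one_sixtieth :
    π * √π * Gamma (1 / 60)
      = 2 ^ (109 / 30 : ℝ) * √3 * 5 ^ (1 / 6 : ℝ)
        * (cos (π / 60) * cos (π / 30) * (cos (2 * π / 15) * sin (2 * π / 15)))
        * (Gamma (1 / 3) ^ 2 * Gamma (11 / 30) * Gamma (29 / 60)) := by
  have angle : π * (1 / 60) = π / 60 := by ring
  have angle_two : π * (2 * (1 / 60)) = π / 30 := by ring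
  have quadruplication := pi_mul_Gamma_eq (x := 1 / 60)
    (by rw [angle]; exact (cos_pos_of_mem_Ioo ⟨by linarith [pi_pos], by linarith [pi_pos]⟩).ne')
    (by rw [angle_two]; exact (cos_pos_of_mem_Ioo ⟨by linarith [pi_pos], by linarith [pi_pos]⟩).ne')
  rw [angle, angle_two] at quadruplication
  norm_num at quadruplication
  have two_rpow : (2 : ℝ) ^ (109 / 30 : ℝ) = 2 ^ (19 / 10 : ℝ) * 2 ^ (26 / 15 : ℝ) := by
    rw [← rpow_add two_pos]
    norm_num
  rw [two_rpow]
  linear_combination √π * quadruplication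
    + 2 ^ (19 / 10 : ℝ) * cos (π / 60) * cos (π / 30) * Gamma (29 / 60)
      * sqrt_pi_mul_Gamma_one_fifteenth_mul_Gamma_seven_fifteenths

theorem Gamma_three_twentieths_mul_Gamma_twentynine_sixtieths :
    Gamma (3 / 20) * Gamma (29 / 60)
      = 2 * 3 ^ (1 / 20 : ℝ) * sin (11 * π / 60) * (Gamma (9 / 20) * Gamma (11 / 60)) := by
  have angle : π * (1 / 3 - 3 / 20) = 11 * π / 60 := by ring
  have sin_pos : 0 < sin (11 * π / 60) :=
    sin_pos_of_pos_of_lt_pi (by positivity) (by linarith [pi_pos])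
  have h := Gamma_mul_Gamma_add_third (x := 3 / 20) (by norm_num) (by rw [angle]; exact sin_pos.ne')
  rw [angle] at h
  norm_num at h
  exact h

theorem Gamma_one_sixtieth_mul_Gamma_seven_twentieths_mul_Gamma_eleven_thirtieths :
    Gamma (1 / 60) * Gamma (7 / 20) * Gamma (11 / 30)
      = √π * 2 ^ (11 / 30 : ℝ) * 3 ^ (9 / 20 : ℝ) * (Gamma (11 / 60) * Gamma (1 / 20)) := by
  have h := Gamma_mul_Gamma_add_third_mul_Gamma_two_mul_add_third (x := 1 / 60) (by norm_num)
  norm_num at h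
  exact h

theorem pi_mul_Gamma_one_sixtieth_sq :
    π * Gamma (1 / 60) ^ 2
      = 24 * 5 ^ (5 / 12 : ℝ)
        * (cos (π / 5) * cos (2 * π / 15) * (cos (π / 10) + cos (π / 5)))
        * (Gamma (11 / 60) * Gamma (1 / 3)) ^ 2 := by
  have two_rpow : (2 : ℝ) ^ (109 / 30 : ℝ) * 2 ^ (11 / 30 : ℝ) = 16 := by
    rw [← rpow_add two_pos]
    norm_num
  have three_rpow : √3 * (3 ^ (9 / 20 : ℝ) * 3 ^ (1 / 20 : ℝ)) = 3 := by
    rw [← rpow_add three_pos, show (9 / 20 + 1 / 20 : ℝ) = 1 / 2 by norm_num, ← sqrt_eq_rpow,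
      mul_self_sqrt zero_le_three]
  have five_rpow : (5 : ℝ) ^ (5 / 12 : ℝ) = 5 ^ (1 / 6 : ℝ) * 5 ^ (1 / 4 : ℝ) := by
    rw [← rpow_add (by norm_num)]
    norm_num
  set cancelled := √π * (Gamma (7 / 20) * Gamma (11 / 30) * Gamma (3 / 20) * Gamma (29 / 60)
    * Gamma (1 / 20) * Gamma (9 / 20))
  refine mul_right_cancel₀ (b := cancelled) (by positivity) ?_
  calc π * Gamma (1 / 60) ^ 2 * cancelled
      = (π * √π * Gamma (1 / 60)) * (Gamma (1 / 60) * Gamma (7 / 20) * Gamma (11 / 30))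
          * (Gamma (3 / 20) * Gamma (29 / 60)) * (Gamma (1 / 20) * Gamma (9 / 20)) := by ring
    _ = 8 * (2 ^ (109 / 30 : ℝ) * 2 ^ (11 / 30 : ℝ))
          * (√3 * (3 ^ (9 / 20 : ℝ) * 3 ^ (1 / 20 : ℝ)))
          * (5 ^ (1 / 6 : ℝ) * 5 ^ (1 / 4 : ℝ))
          * (cos (2 * π / 15) * (cos (π / 30) * sin (2 * π / 15))
            * (cos (π / 60) * sin (11 * π / 60) * sin (7 * π / 20) * sin (3 * π / 20)))
          * (Gamma (11 / 60) * Gamma (1 / 3)) ^ 2 * cancelled := by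
        rw [pi_mul_sqrt_pi_mul_Gamma_one_sixtieth,
          Gamma_one_sixtieth_mul_Gamma_seven_twentieths_mul_Gamma_eleven_thirtieths,
          Gamma_three_twentieths_mul_Gamma_twentynine_sixtieths,
          Gamma_one_twentieth_mul_Gamma_nine_twentieths]
        ring
    _ = _ := by
        rw [two_rpow, three_rpow, five_rpow, cos_pi_div_thirty_mul_sin,
          cos_pi_div_sixty_mul_sin_mul_sin_mul_sin]
        ring

theorem Gamma_eleven_sixtieths_mul_Gamma_one_third_sq :
    (Gamma (11 / 60) * Gamma (1 / 3)) ^ 2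
      = π * (5 + √5) * (√15 - √(5 + 2 * √5)) * (√10 - √(5 + √5))
        / (60 * √2 * 5 ^ (5 / 12 : ℝ)) * Gamma (1 / 60) ^ 2 := by
  rw [div_mul_eq_mul_div, eq_div_iff (by positivity)]
  linear_combination -(5 + √5) * (√15 - √(5 + 2 * √5)) * (√10 - √(5 + √5))
    * pi_mul_Gamma_one_sixtieth_sq - 24 * 5 ^ (5 / 12 : ℝ)
    * (Gamma (11 / 60) * Gamma (1 / 3)) ^ 2 * radicals_mul_cosines

theorem sqrt_radical_quotient_sq :
    (√π * √(5 + √5) * √(√15 - √(5 + 2 * √5)) * √(√10 - √(5 + √5))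
        / ((2 : ℝ) ^ ((5 : ℝ) / 4) * √3 * (5 : ℝ) ^ ((17 : ℝ) / 24))) ^ 2
      = π * (5 + √5) * (√15 - √(5 + 2 * √5)) * (√10 - √(5 + √5))
        / (60 * √2 * 5 ^ (5 / 12 : ℝ)) := by
  have sqrt_five_le : √5 ≤ 5 := sqrt_le_iff.mpr (by norm_num)
  have sqrt_fifteen_sub_nonneg : 0 ≤ √15 - √(5 + 2 * √5) :=
    sub_nonneg.mpr (sqrt_le_sqrt (by linarith))
  have sqrt_ten_sub_nonneg : 0 ≤ √10 - √(5 + √5) :=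
    sub_nonneg.mpr (sqrt_le_sqrt (by linarith))
  have two_rpow_sq : ((2 : ℝ) ^ ((5 : ℝ) / 4)) ^ 2 = 4 * √2 := by
    rw [← rpow_mul_natCast zero_le_two, show (5 : ℝ) / 4 * (2 : ℕ) = 2 + 1 / 2 by norm_num,
      rpow_add two_pos, ← sqrt_eq_rpow]
    norm_num
  have five_rpow_sq : ((5 : ℝ) ^ ((17 : ℝ) / 24)) ^ 2 = 5 * 5 ^ (5 / 12 : ℝ) := by
    rw [← rpow_mul_natCast (by norm_num), ← rpow_one_add' (by norm_num) (by norm_num)]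
    norm_num
  rw [div_pow, mul_pow, mul_pow, mul_pow, mul_pow, mul_pow, sq_sqrt pi_pos.le,
    sq_sqrt (by positivity), sq_sqrt sqrt_fifteen_sub_nonneg, sq_sqrt sqrt_ten_sub_nonneg,
    sq_sqrt zero_le_three, two_rpow_sq, five_rpow_sq]
  ring

theorem gamma_eleven_sixtieths :
    Real.Gamma (11/60) =
      (Real.sqrt π * Real.sqrt (5 + Real.sqrt 5) *
          Real.sqrt (Real.sqrt 15 - Real.sqrt (5 + 2 * Real.sqrt 5)) *
          Real.sqrt (Real.sqrt 10 - Real.sqrt (5 + Real.sqrt 5)) /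
          ((2:ℝ) ^ ((5:ℝ)/4) * Real.sqrt 3 * (5:ℝ) ^ ((17:ℝ)/24))) *
        (Real.Gamma (1/3))⁻¹ * Real.Gamma (1/60) := by
  rw [mul_right_comm, ← div_eq_mul_inv, eq_div_iff (by positivity),
    ← pow_left_inj₀ (by positivity) (by positivity) two_ne_zero, mul_pow _ (Gamma (1 / 60)),
    sqrt_radical_quotient_sq, Gamma_eleven_sixtieths_mul_Gamma_one_third_sq]
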